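/- Let γ ∈ (0,2), set Q = 2/γ + γ/2, and let ξ > 0. Let D be a metric on the unit square [0,1]². Assume: (i) for every s ∈ (0, ξQ) and every ζ ∈ (0,1) there exists N ∈ ℕ such that for all n ≥ N, the number of squares S ∈ 𝒟_n whose D-diameter exceeds 2^{−sn} is at most 2^{(2 − (ξQ − s)²/(2ξ²) + ζ)·n}; and (ii) for every s ∈ (0, ξ(Q−2)) there exists N ∈ ℕ such that for all n ≥ N, every S ∈ 𝒟_n has D-diameter at most 2^{−sn}. Then for every set X ⊆ [0,1]², writing d₀ for the Hausdorff dimension of X with respect to the Euclidean metric: the Hausdorff dimension of X with respect to D is at most d₀/(ξ(Q − √(4 − 2d₀))) if d₀ < 2 − γ²/2, and is at most γ/ξ in any case. -/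

import Mathlib

open scoped ENNReal NNReal

noncomputable section

/-- Distance in an alternative metric `D` on `ℂ`. -/
def mdist (D : MetricSpace ℂ) (a b : ℂ) : ℝ := @dist ℂ D.toDist a b

/-- The `D`-distance between two sets: `inf {D(a,b) : a ∈ A, b ∈ B}`. -/
def msetDist (D : MetricSpace ℂ) (A B : Set ℂ) : ℝ :=
  sInf {r : ℝ | ∃ a ∈ A, ∃ b ∈ B, r = mdist D a b}

/-- The `D`-diameter of a set: `sup {D(u,v) : u, v ∈ A}`. -/
def mdiam (D : MetricSpace ℂ) (A : Set ℂ) : ℝ≥0∞ :=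
  @EMetric.diam ℂ (@PseudoMetricSpace.toPseudoEMetricSpace ℂ D.toPseudoMetricSpace) A

/-- Hausdorff dimension of `X` as a subset of the metric space `(ℂ, D)`. -/
def mdimH (D : MetricSpace ℂ) (X : Set ℂ) : ℝ≥0∞ :=
  @dimH ℂ (@MetricSpace.toEMetricSpace ℂ D) X

/-- The open Euclidean `r`-neighborhood of a set `A ⊆ ℂ`. -/
def euclNbhd (r : ℝ) (A : Set ℂ) : Set ℂ := {z | ∃ a ∈ A, dist z a < r}

/-- The dyadic square `[j 2^(-n), (j+1) 2^(-n)] × [k 2^(-n), (k+1) 2^(-n)]` in `ℂ ≅ ℝ²`. -/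
def dyadicSquare (n j k : ℤ) : Set ℂ :=
  {z : ℂ | z.re ∈ Set.Icc ((j : ℝ) * 2 ^ (-n)) (((j : ℝ) + 1) * 2 ^ (-n)) ∧
           z.im ∈ Set.Icc ((k : ℝ) * 2 ^ (-n)) (((k : ℝ) + 1) * 2 ^ (-n))}

/-- The `D`-length of a path restricted to a set: the supremum over all finite increasing
sequences of sample points in the set of the sums of consecutive `D`-distances. -/
def mpathLength (D : MetricSpace ℂ) (P : ℝ → ℂ) (s : Set ℝ) : ℝ≥0∞ :=
  @eVariationOn ℝ _ ℂ (@PseudoMetricSpace.toPseudoEMetricSpace ℂ D.toPseudoMetricSpace) P s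

/-- `(ℂ, D)` is a length space: `D(x,y)` is the infimum of the `D`-lengths of continuous
paths from `x` to `y`. -/
def IsLengthSpace (D : MetricSpace ℂ) : Prop :=
  ∀ x y : ℂ,
    ENNReal.ofReal (mdist D x y) =
      ⨅ (P : ℝ → ℂ) (_ : ContinuousOn P (Set.Icc 0 1)) (_ : P 0 = x) (_ : P 1 = y),
        mpathLength D P (Set.Icc 0 1)

/-- The unit square `[0,1]²` in `ℂ`. -/
def unitSquare : Set ℂ := dyadicSquare 0 0 0

/-- The `D`-diameter of a subset `A` of the unit square, for a metric `D` on `[0,1]²`. -/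
def sqDiam (D : MetricSpace ↥unitSquare) (A : Set ℂ) : ℝ≥0∞ :=
  @EMetric.diam ↥unitSquare
    (@PseudoMetricSpace.toPseudoEMetricSpace ↥unitSquare D.toPseudoMetricSpace)
    (Subtype.val ⁻¹' A)

/-- The Hausdorff dimension of a subset `X` of the unit square with respect to a metric `D`
on `[0,1]²`. -/
def sqDimH (D : MetricSpace ↥unitSquare) (X : Set ℂ) : ℝ≥0∞ :=
  @dimH ↥unitSquare (@MetricSpace.toEMetricSpace ↥unitSquare D) (Subtype.val ⁻¹' X)

open Filter Metric MeasureTheory Topology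

theorem dimH_setOf_frequently_mem_le {Y ι : Type*} [EMetricSpace Y] (F : ℕ → Finset ι)
    (A : ℕ → ι → Set Y) {a s q : ℝ} (hs : 0 < s) (hq : 0 < q) (haq : a < s * q)
    (hcard : ∀ᶠ n : ℕ in atTop, ((F n).card : ℝ) ≤ 2 ^ (a * n))
    (hdiam : ∀ᶠ n : ℕ in atTop, ∀ i ∈ F n,
      ediam (A n i) ≤ ENNReal.ofReal ((2 : ℝ) ^ (-(s * n)))) :
    dimH {y | ∃ᶠ n in atTop, ∃ i ∈ F n, y ∈ A n i} ≤ ENNReal.ofReal q := by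
  borelize Y
  obtain ⟨N₀, hN₀⟩ := eventually_atTop.1 (hcard.and hdiam)
  have hρ0 : (0 : ℝ) < 2 ^ (a - s * q) := by positivity
  have hρ1 : (2 : ℝ) ^ (a - s * q) < 1 :=
    Real.rpow_lt_one_of_one_lt_of_neg one_lt_two (by linarith)
  have hσ0 : (0 : ℝ) < 2 ^ (-s) := by positivity
  have hσ1 : (2 : ℝ) ^ (-s) < 1 := Real.rpow_lt_one_of_one_lt_of_neg one_lt_two (by linarith)
  have hpow : ∀ n : ℕ, (2 : ℝ) ^ (-(s * n)) = ((2 : ℝ) ^ (-s)) ^ n := fun n => by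
    rw [← Real.rpow_mul_natCast (by norm_num)]; congr 1; ring
  set C : ℝ≥0∞ := ∑' n : ℕ, ENNReal.ofReal (((2 : ℝ) ^ (a - s * q)) ^ n) with hC
  have hCtop : C ≠ ∞ := (summable_geometric_of_lt_one hρ0.le hρ1).tsum_ofReal_ne_top
  have hterm : ∀ n, N₀ ≤ n → ∑ i ∈ F n, ediam (A n i) ^ q ≤
      ENNReal.ofReal (((2 : ℝ) ^ (a - s * q)) ^ n) := by
    intro n hn
    obtain ⟨hc, hd⟩ := hN₀ n hn
    calc ∑ i ∈ F n, ediam (A n i) ^ q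
        ≤ ∑ i ∈ F n, ENNReal.ofReal (((2 : ℝ) ^ (-(s * n))) ^ q) := by
          refine Finset.sum_le_sum fun i hi => ?_
          rw [← ENNReal.ofReal_rpow_of_pos (by positivity)]
          exact ENNReal.rpow_le_rpow (hd i hi) hq.le
      _ = ENNReal.ofReal ((F n).card * ((2 : ℝ) ^ (-(s * n))) ^ q) := by
          rw [Finset.sum_const, nsmul_eq_mul, ENNReal.ofReal_mul (by positivity),
            ENNReal.ofReal_natCast]
      _ ≤ ENNReal.ofReal (((2 : ℝ) ^ (a - s * q)) ^ n) := by
          refine ENNReal.ofReal_le_ofReal ?_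
          calc ((F n).card : ℝ) * ((2 : ℝ) ^ (-(s * n))) ^ q
              ≤ 2 ^ (a * n) * ((2 : ℝ) ^ (-(s * n))) ^ q := by gcongr
            _ = ((2 : ℝ) ^ (a - s * q)) ^ n := by
              rw [← Real.rpow_mul (by norm_num), ← Real.rpow_add (by norm_num),
                ← Real.rpow_mul_natCast (by norm_num)]
              congr 1; ring
  have key : μH[q] {y | ∃ᶠ n in atTop, ∃ i ∈ F n, y ∈ A n i} ≤ C := by
    refine (Measure.hausdorffMeasure_le_liminf_tsum (l := atTop) (β := ℕ)
      (ι := fun N => Σ n : ℕ, {i // i ∈ F (N + n)}) q _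
      (fun N => ENNReal.ofReal (((2 : ℝ) ^ (-s)) ^ N)) ?_
      (fun N x => A (N + x.1) x.2) ?_ ?_).trans ?_
    · rw [← ENNReal.ofReal_zero]
      exact ENNReal.tendsto_ofReal (tendsto_pow_atTop_nhds_zero_of_lt_one hσ0.le hσ1)
    · filter_upwards [eventually_ge_atTop N₀] with N hN
      rintro ⟨n, i, hi⟩
      refine ((hN₀ (N + n) (by omega)).2 i hi).trans (ENNReal.ofReal_le_ofReal ?_)
      rw [hpow]
      exact pow_le_pow_of_le_one hσ0.le hσ1.le (by omega)
    · refine Eventually.of_forall fun N y hy => ?_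
      obtain ⟨m, hm, i, hi, hyi⟩ := frequently_atTop.1 hy N
      obtain ⟨n, rfl⟩ := Nat.exists_eq_add_of_le hm
      exact Set.mem_iUnion.2 ⟨⟨n, i, hi⟩, hyi⟩
    · have hle : ∀ᶠ N in (atTop : Filter ℕ),
          (∑' x : Σ n : ℕ, {i // i ∈ F (N + n)}, ediam (A (N + x.1) x.2) ^ q) ≤ C := by
        filter_upwards [eventually_ge_atTop N₀] with N hN
        rw [ENNReal.tsum_sigma']
        calc _ ≤ ∑' n, ENNReal.ofReal (((2 : ℝ) ^ (a - s * q)) ^ (N + n)) := by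
              refine ENNReal.tsum_le_tsum fun n => ?_
              have := hterm (N + n) (by omega)
              rwa [← Finset.tsum_subtype] at this
          _ ≤ C := ENNReal.tsum_comp_le_tsum_of_injective (add_right_injective N)
              (fun n => ENNReal.ofReal (((2 : ℝ) ^ (a - s * q)) ^ n))
      exact (liminf_le_liminf hle).trans_eq (liminf_const C)
  have := dimH_le_of_hausdorffMeasure_ne_top (d := q.toNNReal)
    (s := {y | ∃ᶠ n in atTop, ∃ i ∈ F n, y ∈ A n i})
    (by rw [Real.coe_toNNReal _ hq.le]; exact ne_top_of_le_ne_top hCtop key)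
  exact this

theorem mem_dyadicSquare_iff {n j k : ℕ} {z : ℂ} :
    z ∈ dyadicSquare n j k ↔ ((j : ℝ) ≤ z.re * 2 ^ n ∧ z.re * 2 ^ n ≤ j + 1) ∧
      ((k : ℝ) ≤ z.im * 2 ^ n ∧ z.im * 2 ^ n ≤ k + 1) := by
  have h : (0 : ℝ) < 2 ^ n := by positivity
  simp only [dyadicSquare, Set.mem_ofPred_eq, Set.mem_Icc, zpow_neg, zpow_natCast, Int.cast_natCast,
    ← div_eq_mul_inv, div_le_iff₀ h, le_div_iff₀ h]

theorem mem_unitSquare_iff {z : ℂ} :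
    z ∈ unitSquare ↔ (0 ≤ z.re ∧ z.re ≤ 1) ∧ (0 ≤ z.im ∧ z.im ≤ 1) := by
  simpa [unitSquare] using mem_dyadicSquare_iff (n := 0) (j := 0) (k := 0) (z := z)

theorem exists_unit_intervals_meeting {M : ℕ} (hM : 0 < M) {a b : ℝ} (ha : 0 ≤ a) (ha' : a ≤ M)
    (hb : 0 ≤ b) (hb' : b ≤ M) (hab : |a - b| ≤ 1) :
    ∃ j k : ℕ, ∃ c : ℝ, j < M ∧ k < M ∧ (0 ≤ c ∧ c ≤ M) ∧ (j ≤ a ∧ a ≤ j + 1) ∧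
      (k ≤ b ∧ b ≤ k + 1) ∧ (j ≤ c ∧ c ≤ j + 1) ∧ (k ≤ c ∧ c ≤ k + 1) := by
  wlog h : a ≤ b generalizing a b
  · obtain ⟨j, k, c, hj, hk, hc, h1, h2, h3, h4⟩ :=
      this hb hb' ha ha' (by rwa [abs_sub_comm]) (le_of_not_ge h)
    exact ⟨k, j, c, hk, hj, hc, h2, h1, h4, h3⟩
  rw [abs_le] at hab
  rcases ha'.lt_or_eq with haM | rfl
  · have h1 := Nat.floor_le ha
    have h2 := Nat.lt_floor_add_one a
    have h3 : ⌊a⌋₊ < M := (Nat.floor_lt ha).2 haM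
    by_cases hbj : b ≤ ⌊a⌋₊ + 1
    · exact ⟨⌊a⌋₊, ⌊a⌋₊, a, h3, h3, ⟨ha, ha'⟩, ⟨h1, h2.le⟩, ⟨by linarith, hbj⟩, ⟨h1, h2.le⟩,
        ⟨h1, h2.le⟩⟩
    · push Not at hbj
      have h4 : ⌊a⌋₊ + 1 < M := by exact_mod_cast hbj.trans_le hb'
      refine ⟨⌊a⌋₊, ⌊a⌋₊ + 1, ⌊a⌋₊ + 1, h3, h4, ⟨by positivity, by exact_mod_cast h4.le⟩,
        ⟨h1, h2.le⟩, ?_, ?_, ?_⟩ <;> push_cast <;> constructor <;> linarith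
  · have hcast : ((M - 1 : ℕ) : ℝ) = M - 1 := by push_cast [Nat.one_le_iff_ne_zero.2 hM.ne']; rfl
    refine ⟨M - 1, M - 1, M, by omega, by omega, ⟨ha, le_rfl⟩, ?_, ?_, ?_, ?_⟩ <;>
      rw [hcast] <;> constructor <;> linarith

theorem exists_dyadicSquares_meeting (n : ℕ) {z w : ℂ} (hz : z ∈ unitSquare) (hw : w ∈ unitSquare)
    (h : dist z w ≤ (1 / 2) ^ n) :
    ∃ p q : ℕ × ℕ, ∃ c ∈ unitSquare, (p.1 < 2 ^ n ∧ p.2 < 2 ^ n) ∧ (q.1 < 2 ^ n ∧ q.2 < 2 ^ n) ∧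
      z ∈ dyadicSquare n p.1 p.2 ∧ c ∈ dyadicSquare n p.1 p.2 ∧
      w ∈ dyadicSquare n q.1 q.2 ∧ c ∈ dyadicSquare n q.1 q.2 := by
  rw [mem_unitSquare_iff] at hz hw
  have h2 : (0 : ℝ) < 2 ^ n := by positivity
  have scale : ∀ x y : ℝ, |x - y| ≤ dist z w → |x * 2 ^ n - y * 2 ^ n| ≤ 1 := fun x y hxy => by
    rw [← sub_mul, abs_mul, abs_of_pos h2, ← le_div_iff₀ h2, ← one_div_pow]
    exact hxy.trans h
  have bd : ∀ x : ℝ, x ≤ 1 → x * 2 ^ n ≤ ((2 ^ n : ℕ) : ℝ) := fun x hx => by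
    push_cast; nlinarith
  obtain ⟨j, j', c, hj, hj', hc, h1⟩ := exists_unit_intervals_meeting (M := 2 ^ n) (by positivity)
    (mul_nonneg hz.1.1 h2.le) (bd _ hz.1.2) (mul_nonneg hw.1.1 h2.le) (bd _ hw.1.2)
    (scale _ _ (by rw [Complex.dist_eq]; simpa using Complex.abs_re_le_norm (z - w)))
  obtain ⟨k, k', d, hk, hk', hd, h1'⟩ := exists_unit_intervals_meeting (M := 2 ^ n) (by positivity)
    (mul_nonneg hz.2.1 h2.le) (bd _ hz.2.2) (mul_nonneg hw.2.1 h2.le) (bd _ hw.2.2)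
    (scale _ _ (by rw [Complex.dist_eq]; simpa using Complex.abs_im_le_norm (z - w)))
  push_cast at hc hd
  refine ⟨(j, k), (j', k'), ⟨c / 2 ^ n, d / 2 ^ n⟩, ?_, ⟨hj, hk⟩, ⟨hj', hk'⟩, ?_, ?_, ?_, ?_⟩
  · rw [mem_unitSquare_iff]
    exact ⟨⟨div_nonneg hc.1 h2.le, (div_le_one h2).2 hc.2⟩,
      ⟨div_nonneg hd.1 h2.le, (div_le_one h2).2 hd.2⟩⟩
  all_goals
    simp only [mem_dyadicSquare_iff, div_mul_cancel₀ _ h2.ne']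
    tauto

/-- The points all of whose dyadic squares of level at least `N` have diameter at most
`2 ^ (-t n)` in `Y`. -/
def regularPoints {Y : Type*} [EMetricSpace Y] (e : Y → ℂ) (t : ℝ) (N : ℕ) : Set ℂ :=
  {z ∈ unitSquare | ∀ n : ℕ, N ≤ n → ∀ p : ℕ × ℕ, p.1 < 2 ^ n ∧ p.2 < 2 ^ n →
    z ∈ dyadicSquare n p.1 p.2 →
      ediam (e ⁻¹' dyadicSquare n p.1 p.2) ≤ ENNReal.ofReal ((2 : ℝ) ^ (-(t * n)))}

theorem edist_le_of_mem_regularPoints {Y : Type*} [EMetricSpace Y] {e : Y → ℂ} {f : ℂ → Y}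
    (hef : ∀ z ∈ unitSquare, e (f z) = z) {t : ℝ} (ht : 0 < t) {N : ℕ} {z w : ℂ}
    (hz : z ∈ regularPoints e t N) (hw : w ∈ regularPoints e t N) (hzw : dist z w ≤ (1 / 2) ^ N) :
    edist (f z) (f w) ≤ ENNReal.ofReal (2 * 2 ^ t) * edist z w ^ t := by
  rcases eq_or_ne z w with rfl | hne
  · simp
  have hpos : 0 < dist z w := dist_pos.2 hne
  obtain ⟨n, hn1, hn2⟩ := exists_nat_pow_near_of_lt_one hpos
    (hzw.trans (pow_le_one₀ (by norm_num) (by norm_num))) (by norm_num : (0 : ℝ) < 1 / 2)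
    (by norm_num)
  have hNn : N ≤ n := by
    have := (pow_lt_pow_iff_right_of_lt_one₀ (by norm_num) (by norm_num)).1 (hn1.trans_le hzw)
    omega
  obtain ⟨p, q, c, hc, hp, hq, hzp, hcp, hwq, hcq⟩ := exists_dyadicSquares_meeting n hz.1 hw.1 hn2
  have h1 : edist (f z) (f c) ≤ ENNReal.ofReal ((2 : ℝ) ^ (-(t * n))) :=
    (edist_le_ediam_of_mem (by simpa [hef z hz.1] using hzp) (by simpa [hef c hc] using hcp)).trans
      (hz.2 n hNn p hp hzp)
  have h2 : edist (f c) (f w) ≤ ENNReal.ofReal ((2 : ℝ) ^ (-(t * n))) :=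
    (edist_le_ediam_of_mem (by simpa [hef c hc] using hcq) (by simpa [hef w hw.1] using hwq)).trans
      (hw.2 n hNn q hq hwq)
  calc edist (f z) (f w) ≤ edist (f z) (f c) + edist (f c) (f w) := edist_triangle _ _ _
    _ ≤ ENNReal.ofReal ((2 : ℝ) ^ (-(t * n))) + ENNReal.ofReal ((2 : ℝ) ^ (-(t * n))) :=
        add_le_add h1 h2
    _ = ENNReal.ofReal (2 * 2 ^ t * ((1 / 2) ^ (n + 1)) ^ t) := by
        rw [← ENNReal.ofReal_add (by positivity) (by positivity), ← two_mul, mul_assoc,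
          ← Real.mul_rpow (by norm_num) (by positivity)]
        congr 2
        have : (2 * (1 / 2) ^ (n + 1) : ℝ) = 2 ^ (-(n : ℝ)) := by
          rw [Real.rpow_neg (by norm_num), Real.rpow_natCast, pow_succ, one_div, inv_pow]; ring
        rw [this, ← Real.rpow_mul (by norm_num)]
        congr 1; ring
    _ ≤ ENNReal.ofReal (2 * 2 ^ t) * edist z w ^ t := by
        rw [edist_dist, ENNReal.ofReal_rpow_of_pos hpos, ← ENNReal.ofReal_mul (by positivity)]
        gcongr

theorem dimH_image_regularPoints_inter_le {Y : Type*} [EMetricSpace Y] {e : Y → ℂ} {f : ℂ → Y}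
    (hef : ∀ z ∈ unitSquare, e (f z) = z) {t : ℝ} (ht : 0 < t) (N : ℕ) (X : Set ℂ) :
    dimH (f '' (regularPoints e t N ∩ X)) ≤ dimH X / ENNReal.ofReal t := by
  have h0 : (0 : ℝ) < (1 / 2) ^ N / 2 := by positivity
  refine (dimH_image_le_of_locally_holder_on (r := t.toNNReal) (Real.toNNReal_pos.2 ht)
    fun x hx => ⟨(2 * 2 ^ t : ℝ).toNNReal, ball x ((1 / 2) ^ N / 2) ∩ (regularPoints e t N ∩ X),
      inter_mem (mem_nhdsWithin_of_mem_nhds (ball_mem_nhds x h0)) self_mem_nhdsWithin, ?_⟩).trans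
    (ENNReal.div_le_div_right (dimH_mono Set.inter_subset_right) _)
  intro z hz w hw
  rw [Real.coe_toNNReal _ ht.le]
  refine edist_le_of_mem_regularPoints hef ht hz.2.1 hw.2.1 ?_
  have := dist_triangle_right z w x
  have h1 := mem_ball.1 hz.1
  have h2 := mem_ball.1 hw.1
  linarith

/-- The points of `Y` lying in squares of infinitely many levels `n` whose diameter in `Y` exceeds
`2 ^ (-s n)`. -/
def frequentlyLarge {Y : Type*} [EMetricSpace Y] (e : Y → ℂ) (s : ℝ) : Set Y :=
  {y | ∃ᶠ n : ℕ in atTop, ∃ p : ℕ × ℕ, (p.1 < 2 ^ n ∧ p.2 < 2 ^ n) ∧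
    e y ∈ dyadicSquare n p.1 p.2 ∧
      ENNReal.ofReal ((2 : ℝ) ^ (-(s * n))) < ediam (e ⁻¹' dyadicSquare n p.1 p.2)}

theorem dimH_frequentlyLarge_le_max {Y : Type*} [EMetricSpace Y] {e : Y → ℂ} {s s' a q : ℝ}
    (hs : 0 < s) (hq : 0 < q) (haq : a < s * q)
    (hcount : ∀ᶠ n : ℕ in atTop,
      (Set.ncard {p : ℕ × ℕ | p.1 < 2 ^ n ∧ p.2 < 2 ^ n ∧
        ENNReal.ofReal ((2 : ℝ) ^ (-(s' * n))) < ediam (e ⁻¹' dyadicSquare n p.1 p.2)} : ℝ) ≤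
          2 ^ (a * n)) :
    dimH (frequentlyLarge e s') ≤ max (dimH (frequentlyLarge e s)) (ENNReal.ofReal q) := by
  have hfin : ∀ n : ℕ, {p : ℕ × ℕ | p.1 < 2 ^ n ∧ p.2 < 2 ^ n ∧
      ENNReal.ofReal ((2 : ℝ) ^ (-(s' * n))) < ediam (e ⁻¹' dyadicSquare n p.1 p.2)}.Finite :=
    fun n => ((Set.finite_Iio (2 ^ n)).prod (Set.finite_Iio (2 ^ n))).subset
      fun p hp => ⟨hp.1, hp.2.1⟩
  classical
  let F : ℕ → Finset (ℕ × ℕ) := fun n => (hfin n).toFinset.filter fun p =>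
    ediam (e ⁻¹' dyadicSquare n p.1 p.2) ≤ ENNReal.ofReal ((2 : ℝ) ^ (-(s * n)))
  have hF := dimH_setOf_frequently_mem_le F (fun n p => e ⁻¹' dyadicSquare n p.1 p.2) hs hq haq
    (by
      filter_upwards [hcount] with n hn
      refine le_trans ?_ hn
      rw [Set.ncard_eq_toFinset_card _ (hfin n)]
      exact_mod_cast Finset.card_filter_le _ _)
    (Eventually.of_forall fun n p hp => (Finset.mem_filter.1 hp).2)
  refine le_trans (dimH_mono ?_) ((dimH_union _ _).trans_le (max_le_max le_rfl hF))
  intro y hy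
  by_cases hys : y ∈ frequentlyLarge e s
  · exact Or.inl hys
  refine Or.inr ((hy.and_eventually (not_frequently.1 hys)).mono ?_)
  rintro n ⟨⟨p, hp, hyp, hlt⟩, hn⟩
  refine ⟨p, Finset.mem_filter.2 ⟨(hfin n).mem_toFinset.2 ⟨hp.1, hp.2, hlt⟩, ?_⟩, hyp⟩
  by_contra hcon
  exact hn ⟨p, hp, hyp, not_le.1 hcon⟩

theorem exists_mem_regularPoints {Y : Type*} [EMetricSpace Y] {e : Y → ℂ} {t : ℝ} {y : Y}
    (hy : e y ∈ unitSquare) (h : y ∉ frequentlyLarge e t) : ∃ N, e y ∈ regularPoints e t N := by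
  obtain ⟨N, hN⟩ := eventually_atTop.1 (not_frequently.1 h)
  refine ⟨N, hy, fun n hn p hp hyp => ?_⟩
  by_contra hcon
  exact hN n hn ⟨p, hp, hyp, not_le.1 hcon⟩

theorem dimH_le_max_frequentlyLarge {Y : Type*} [EMetricSpace Y] {e : Y → ℂ} {f : ℂ → Y}
    (he : ∀ y, e y ∈ unitSquare) (hef : ∀ z ∈ unitSquare, e (f z) = z) (hfe : ∀ y, f (e y) = y)
    {t : ℝ} (ht : 0 < t) (X : Set ℂ) :
    dimH (e ⁻¹' X) ≤ max (dimH (frequentlyLarge e t)) (dimH X / ENNReal.ofReal t) := by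
  have hsub : e ⁻¹' X ⊆ frequentlyLarge e t ∪ ⋃ N, f '' (regularPoints e t N ∩ X) := by
    intro y hy
    by_cases h : y ∈ frequentlyLarge e t
    · exact Or.inl h
    obtain ⟨N, hN⟩ := exists_mem_regularPoints (he y) h
    exact Or.inr (Set.mem_iUnion.2 ⟨N, e y, ⟨hN, hy⟩, hfe y⟩)
  refine (dimH_mono hsub).trans ((dimH_union _ _).trans_le (max_le_max le_rfl ?_))
  rw [dimH_iUnion]
  exact iSup_le fun N => dimH_image_regularPoints_inter_le hef ht N X

/-- A finite chain of exponents from `s₀` to `t` along which consecutive values satisfy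
`d s' < s q`, with uniform slack. -/
theorem exists_uniform_slack {d : ℝ → ℝ} (hd : Continuous d) {s₀ t q : ℝ} (hst : s₀ ≤ t)
    (hq : 0 < q) (h : ∀ s ∈ Set.Icc s₀ t, d s < s * q) :
    ∃ ε > 0, ∀ s ∈ Set.Icc s₀ t, ∀ s' ∈ Set.Icc s₀ t, s' ≤ s + ε → d s' + ε < s * q := by
  obtain ⟨x, hx, hmin⟩ := isCompact_Icc.exists_isMinOn (Set.nonempty_Icc.2 hst)
    (f := fun s => s * q - d s) (by fun_prop)
  have hpos : 0 < x * q - d x := sub_pos.2 (h x hx)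
  refine ⟨(x * q - d x) / (2 * (1 + q)), by positivity, fun s _ s' hs' hle => ?_⟩
  have hm : x * q - d x ≤ s' * q - d s' := hmin hs'
  set η := x * q - d x
  have h1 : η / (2 * (1 + q)) * (1 + q) = η / 2 := by field_simp
  have h2 := mul_le_mul_of_nonneg_right hle hq.le
  nlinarith

theorem dimH_frequentlyLarge_le {Y : Type*} [EMetricSpace Y] {e : Y → ℂ} {d : ℝ → ℝ}
    (hd : Continuous d) {s₀ t q : ℝ} (hs₀ : 0 < s₀) (hst : s₀ ≤ t) (hq : 0 < q)
    (hcount : ∀ s ∈ Set.Icc s₀ t, ∀ ζ : ℝ, 0 < ζ → ζ < 1 → ∀ᶠ n : ℕ in atTop,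
      (Set.ncard {p : ℕ × ℕ | p.1 < 2 ^ n ∧ p.2 < 2 ^ n ∧
        ENNReal.ofReal ((2 : ℝ) ^ (-(s * n))) < ediam (e ⁻¹' dyadicSquare n p.1 p.2)} : ℝ) ≤
          2 ^ ((d s + ζ) * n))
    (hempty : frequentlyLarge e s₀ = ∅) (h : ∀ s ∈ Set.Icc s₀ t, d s < s * q) :
    dimH (frequentlyLarge e t) ≤ ENNReal.ofReal q := by
  obtain ⟨ε, hε, hslack⟩ := exists_uniform_slack hd hst hq h
  have hchain : ∀ k : ℕ, dimH (frequentlyLarge e (min t (s₀ + k * ε))) ≤ ENNReal.ofReal q := by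
    intro k
    induction k with
    | zero => simp [min_eq_right hst, hempty]
    | succ k ih =>
      have hmem : ∀ k : ℕ, min t (s₀ + k * ε) ∈ Set.Icc s₀ t := fun k =>
        ⟨le_min hst (le_add_of_nonneg_right (by positivity)), min_le_left _ _⟩
      have hstep : min t (s₀ + (k + 1 : ℕ) * ε) ≤ min t (s₀ + k * ε) + ε := by
        rw [← min_add_add_right]
        refine min_le_min (by linarith) (le_of_eq ?_)
        push_cast; ring
      set s := min t (s₀ + k * ε)
      set s' := min t (s₀ + (k + 1 : ℕ) * ε)
      refine (dimH_frequentlyLarge_le_max (s := s) (a := d s' + min ε (1 / 2))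
        (hs₀.trans_le (hmem k).1) hq ?_ ?_).trans (max_le ih le_rfl)
      · exact (add_le_add_right (min_le_left _ _) _).trans_lt
          (hslack s (hmem k) s' (hmem (k + 1)) hstep)
      · exact hcount s' (hmem (k + 1)) _ (by positivity)
          ((min_le_right _ _).trans_lt (by norm_num))
  obtain ⟨k, hk⟩ := exists_nat_ge ((t - s₀) / ε)
  have := hchain k
  rwa [min_eq_left] at this
  rw [div_le_iff₀ hε] at hk
  linarith

theorem dimH_preimage_le_of_count {Y : Type*} [EMetricSpace Y] {e : Y → ℂ} {f : ℂ → Y}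
    (he : ∀ y, e y ∈ unitSquare) (hef : ∀ z ∈ unitSquare, e (f z) = z) (hfe : ∀ y, f (e y) = y)
    {d : ℝ → ℝ} (hd : Continuous d) {S₀ S : ℝ} (hS₀ : 0 < S₀)
    (hcount : ∀ s : ℝ, 0 < s → s < S → ∀ ζ : ℝ, 0 < ζ → ζ < 1 → ∃ N : ℕ, ∀ n : ℕ, N ≤ n →
      (Set.ncard {p : ℕ × ℕ | p.1 < 2 ^ n ∧ p.2 < 2 ^ n ∧
          ENNReal.ofReal ((2 : ℝ) ^ (-(s * n))) < ediam (e ⁻¹' dyadicSquare n p.1 p.2)} : ℝ) ≤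
        2 ^ ((d s + ζ) * n))
    (hsmall : ∀ s : ℝ, 0 < s → s < S₀ → ∃ N : ℕ, ∀ n : ℕ, N ≤ n →
      ∀ p : ℕ × ℕ, p.1 < 2 ^ n → p.2 < 2 ^ n →
        ediam (e ⁻¹' dyadicSquare n p.1 p.2) ≤ ENNReal.ofReal ((2 : ℝ) ^ (-(s * n))))
    {t q : ℝ} (ht : 0 < t) (htS : t < S) (hq : 0 < q) (h : ∀ s, 0 < s → s ≤ t → d s < s * q)
    {X : Set ℂ} (hX : dimH X ≤ ENNReal.ofReal (q * t)) :
    dimH (e ⁻¹' X) ≤ ENNReal.ofReal q := by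
  refine (dimH_le_max_frequentlyLarge he hef hfe ht X).trans (max_le ?_ ?_)
  · have hs₀ : 0 < min (S₀ / 2) t := by positivity
    refine dimH_frequentlyLarge_le hd hs₀ (min_le_right _ _) hq
      (fun s hs ζ h0 h1 => eventually_atTop.2
        (hcount s (hs₀.trans_le hs.1) (hs.2.trans_lt htS) ζ h0 h1)) ?_
      fun s hs => h s (hs₀.trans_le hs.1) hs.2
    obtain ⟨N, hN⟩ := hsmall _ hs₀ ((min_le_left _ _).trans_lt (by linarith))
    refine Set.eq_empty_of_forall_notMem fun y hy => ?_
    obtain ⟨n, hn, p, hp, -, hlt⟩ := frequently_atTop.1 hy N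
    exact hlt.not_ge (hN n hn p hp.1 hp.2)
  · refine ENNReal.div_le_of_le_mul ?_
    rwa [← ENNReal.ofReal_mul hq.le]

theorem kpz_exponent_le {γ Q ξ s : ℝ} (hγ0 : 0 < γ) (hQ : Q = 2 / γ + γ / 2) (hξ : 0 < ξ) :
    2 - (ξ * Q - s) ^ 2 / (2 * ξ ^ 2) ≤ s * (γ / ξ) := by
  have hγQ : γ * Q = 2 + γ ^ 2 / 2 := by rw [hQ]; field_simp
  obtain ⟨u, rfl⟩ : ∃ u, s = ξ * (Q - u) := ⟨Q - s / ξ, by field_simp; ring⟩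
  have h1 : (ξ * Q - ξ * (Q - u)) ^ 2 / (2 * ξ ^ 2) = u ^ 2 / 2 := by field_simp; ring
  have h2 : ξ * (Q - u) * (γ / ξ) = γ * Q - γ * u := by field_simp
  rw [h1, h2, hγQ]
  nlinarith [sq_nonneg (u - γ)]

theorem kpz_exponent_le_of_le {γ Q ξ s v : ℝ} (hγ0 : 0 < γ) (hQ : Q = 2 / γ + γ / 2)
    (hξ : 0 < ξ) (hs : 0 < s) (hγv : γ ≤ v) (hvQ : v < Q) (hsv : s ≤ ξ * (Q - v)) :
    2 - (ξ * Q - s) ^ 2 / (2 * ξ ^ 2) ≤ s * ((2 - v ^ 2 / 2) / (ξ * (Q - v))) := by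
  have hγQ : γ * Q = 2 + γ ^ 2 / 2 := by rw [hQ]; field_simp
  obtain ⟨u, rfl⟩ : ∃ u, s = ξ * (Q - u) := ⟨Q - s / ξ, by field_simp; ring⟩
  have hvu : v ≤ u := by have := le_of_mul_le_mul_left hsv hξ; linarith
  have huQ : u < Q := by have := (mul_pos_iff_of_pos_left hξ).1 hs; linarith
  have h1 : (ξ * Q - ξ * (Q - u)) ^ 2 / (2 * ξ ^ 2) = u ^ 2 / 2 := by field_simp; ring
  have hQv : 0 < Q - v := sub_pos.2 hvQ
  have h2 : ξ * (Q - u) * ((2 - v ^ 2 / 2) / (ξ * (Q - v))) =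
      (Q - u) * (2 - v ^ 2 / 2) / (Q - v) := by field_simp
  rw [h1, h2, le_div_iff₀ hQv]
  have hγu : γ ≤ u := hγv.trans hvu
  have h3 : 0 ≤ (Q - γ) * (u - γ) := mul_nonneg (by linarith) (by linarith)
  have h4 : 0 ≤ (Q - u) * (v - γ) := mul_nonneg (by linarith) (by linarith)
  have h5 : 0 ≤ Q * (u + v) - 4 - u * v := by nlinarith
  nlinarith [mul_nonneg (sub_nonneg.2 hvu) h5]

/-- worst-case KPZ bound, upper bound for quantum dimension.
Let `γ ∈ (0,2)`, `Q = 2/γ + γ/2`, `ξ > 0`, and let `D` be a metric on `[0,1]²` satisfying the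
two square-counting hypotheses. Then for every `X ⊆ [0,1]²` with Euclidean Hausdorff dimension
`d₀`, the Hausdorff dimension of `X` w.r.t. `D` is at most `d₀/(ξ(Q - √(4 - 2d₀)))` whenever
`d₀ < 2 - γ²/2`, and is at most `γ/ξ` in any case. -/
theorem worst_case_kpz_quantum (γ : ℝ) (hγ0 : 0 < γ) (hγ2 : γ < 2)
    (Q : ℝ) (hQ : Q = 2 / γ + γ / 2) (ξ : ℝ) (hξ : 0 < ξ)
    (D : MetricSpace ↥unitSquare)
    (hcount : ∀ s : ℝ, 0 < s → s < ξ * Q → ∀ ζ : ℝ, 0 < ζ → ζ < 1 → ∃ N : ℕ, ∀ n : ℕ, N ≤ n →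
      (Set.ncard {p : ℕ × ℕ | p.1 < 2 ^ n ∧ p.2 < 2 ^ n ∧
          ENNReal.ofReal ((2 : ℝ) ^ (-(s * n))) < sqDiam D (dyadicSquare n p.1 p.2)} : ℝ) ≤
        2 ^ ((2 - (ξ * Q - s) ^ 2 / (2 * ξ ^ 2) + ζ) * n))
    (hsmall : ∀ s : ℝ, 0 < s → s < ξ * (Q - 2) → ∃ N : ℕ, ∀ n : ℕ, N ≤ n →
      ∀ p : ℕ × ℕ, p.1 < 2 ^ n → p.2 < 2 ^ n →
        sqDiam D (dyadicSquare n p.1 p.2) ≤ ENNReal.ofReal ((2 : ℝ) ^ (-(s * n)))) :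
    ∀ X : Set ℂ, X ⊆ unitSquare →
      ((dimH X < ENNReal.ofReal (2 - γ ^ 2 / 2) →
        sqDimH D X ≤ ENNReal.ofReal ((dimH X).toReal /
          (ξ * (Q - Real.sqrt (4 - 2 * (dimH X).toReal))))) ∧
       sqDimH D X ≤ ENNReal.ofReal (γ / ξ)) := by
  classical
  intro X hX
  have hγQ : γ * Q = 2 + γ ^ 2 / 2 := by rw [hQ]; field_simp
  have hQ2 : 2 < Q := by
    have : 0 < (2 - γ) ^ 2 := pow_pos (sub_pos.2 hγ2) 2
    by_contra! hle
    nlinarith [mul_le_mul_of_nonneg_left hle hγ0.le]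
  have h0 : (0 : ℂ) ∈ unitSquare := by simp [mem_unitSquare_iff]
  have main : ∀ t q : ℝ, 0 < t → t < ξ * Q → 0 < q →
      (∀ s, 0 < s → s ≤ t → 2 - (ξ * Q - s) ^ 2 / (2 * ξ ^ 2) < s * q) →
      dimH X ≤ ENNReal.ofReal (q * t) → sqDimH D X ≤ ENNReal.ofReal q :=
    fun t q ht htS hq h hXt => @dimH_preimage_le_of_count unitSquare D.toEMetricSpace Subtype.val
      (fun z => if hz : z ∈ unitSquare then ⟨z, hz⟩ else ⟨0, h0⟩) Subtype.prop
      (fun z hz => by simp [hz]) (fun y => by simp)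
      (fun s => 2 - (ξ * Q - s) ^ 2 / (2 * ξ ^ 2)) (by fun_prop) (ξ * (Q - 2)) (ξ * Q)
      (mul_pos hξ (by linarith)) hcount hsmall t q ht htS hq h X hXt
  have hXtop : dimH X ≠ ⊤ := Real.dimH_ne_top X
  constructor
  · intro hdim
    set d₀ := (dimH X).toReal with hd₀
    have hd₀0 : 0 ≤ d₀ := ENNReal.toReal_nonneg
    have hXd : dimH X = ENNReal.ofReal d₀ := (ENNReal.ofReal_toReal hXtop).symm
    have hd₀lt : d₀ < 2 - γ ^ 2 / 2 := by
      rw [hXd] at hdim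
      exact (ENNReal.ofReal_lt_ofReal_iff_of_nonneg hd₀0).1 hdim
    set v := Real.sqrt (4 - 2 * d₀)
    have hv2 : v ^ 2 = 4 - 2 * d₀ := Real.sq_sqrt (by nlinarith [sq_nonneg γ])
    have hv0 : 0 ≤ v := Real.sqrt_nonneg _
    have hγv : γ ≤ v := Real.le_sqrt_of_sq_le (by linarith)
    have hvQ : v < Q := lt_of_le_of_lt (by nlinarith) hQ2
    have hT : 0 < ξ * (Q - v) := mul_pos hξ (sub_pos.2 hvQ)
    refine le_of_forall_gt_imp_ge_of_dense fun r hr => ?_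
    rcases eq_or_ne r ⊤ with rfl | hrtop
    · exact le_top
    obtain ⟨q, hq0, rfl⟩ : ∃ q : ℝ, 0 ≤ q ∧ r = ENNReal.ofReal q :=
      ⟨r.toReal, ENNReal.toReal_nonneg, (ENNReal.ofReal_toReal hrtop).symm⟩
    have hlt : d₀ / (ξ * (Q - v)) < q :=
      (ENNReal.ofReal_lt_ofReal_iff_of_nonneg (by positivity)).1 hr
    have hq : 0 < q := lt_of_le_of_lt (by positivity) hlt
    obtain ⟨t, ht1, ht2⟩ := exists_between ((div_lt_comm₀ hT hq).1 hlt)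
    have ht : 0 < t := lt_of_le_of_lt (by positivity) ht1
    refine main t q ht (by nlinarith) hq (fun s hs hst => ?_) ?_
    · refine (kpz_exponent_le_of_le hγ0 hQ hξ hs hγv hvQ (hst.trans ht2.le)).trans_lt
        (mul_lt_mul_of_pos_left ?_ hs)
      rwa [hv2, show 2 - (4 - 2 * d₀) / 2 = d₀ by ring]
    · rw [hXd]
      exact ENNReal.ofReal_le_ofReal ((div_le_iff₀' hq).1 ht1.le)
  · refine le_of_forall_gt_imp_ge_of_dense fun r hr => ?_
    rcases eq_or_ne r ⊤ with rfl | hrtop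
    · exact le_top
    obtain ⟨q, hq0, rfl⟩ : ∃ q : ℝ, 0 ≤ q ∧ r = ENNReal.ofReal q :=
      ⟨r.toReal, ENNReal.toReal_nonneg, (ENNReal.ofReal_toReal hrtop).symm⟩
    have hlt : γ / ξ < q := (ENNReal.ofReal_lt_ofReal_iff_of_nonneg (by positivity)).1 hr
    have hq : 0 < q := lt_of_le_of_lt (by positivity) hlt
    refine main (ξ * (2 / γ)) q (by positivity) ?_ hq (fun s hs _ =>
      (kpz_exponent_le hγ0 hQ hξ).trans_lt (mul_lt_mul_of_pos_left hlt hs)) ?_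
    · rw [hQ]
      exact mul_lt_mul_of_pos_left (by linarith) hξ
    · calc dimH X ≤ dimH (Set.univ : Set ℂ) := dimH_mono (Set.subset_univ X)
        _ = ENNReal.ofReal 2 := by
          rw [Real.dimH_univ_eq_finrank, Complex.finrank_real_complex]; simp
        _ ≤ ENNReal.ofReal (q * (ξ * (2 / γ))) := by
          refine ENNReal.ofReal_le_ofReal ?_
          calc (2 : ℝ) = γ / ξ * (ξ * (2 / γ)) := by field_simp
            _ ≤ q * (ξ * (2 / γ)) := by gcongr
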